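/- Let n ≥ 2, let x₁, …, xₙ be pairwise distinct variables, and let φₙ = {{¬xᵢ, x_{i+1}} : 1 ≤ i < n} ∪ {{¬xₙ, ¬x₁}}. Then φₙ ⊨ ¬x₁ (so x₁ is a backbone of φₙ), but for every integer k with 1 ≤ k < n, the variable x₁ is not an iterative k-backbone of φₙ. -/

import Mathlib

/-! Basic definitions: literals, clauses, CNF formulas, satisfaction,
entailment, reducts, (iterative) k-backbones, Horn clauses, hyperpaths,
implication-graph paths for Krom formulas. -/

section LB

variable {V : Type*}

/-- The complement of a literal (a literal is a variable together with a polarity). -/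
def LitCompl (l : V × Bool) : V × Bool := (l.1, !l.2)

/-- A clause is proper: it contains no complementary pair of literals. -/
def ClauseOk (c : Finset (V × Bool)) : Prop := ∀ x : V, ¬((x, true) ∈ c ∧ (x, false) ∈ c)

/-- An assignment satisfies a clause if it makes some literal of it true. -/
def SatClause (τ : V → Bool) (c : Finset (V × Bool)) : Prop := ∃ l ∈ c, τ l.1 = l.2

/-- An assignment satisfies a CNF formula if it satisfies all of its clauses. -/
def SatCNF (τ : V → Bool) (φ : Finset (Finset (V × Bool))) : Prop := ∀ c ∈ φ, SatClause τ c

/-- A CNF formula is satisfiable if some assignment satisfies it. -/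
def CNFSatisfiable (φ : Finset (Finset (V × Bool))) : Prop := ∃ τ, SatCNF τ φ

/-- `φ ⊨ l`: every assignment satisfying `φ` makes the literal `l` true. -/
def EntailsLit (φ : Finset (Finset (V × Bool))) (l : V × Bool) : Prop :=
  ∀ τ : V → Bool, SatCNF τ φ → τ l.1 = l.2

/-- `x` is a `k`-backbone of `φ`: some subset of at most `k` clauses entails `x` or `¬x`. -/
def KBackbone (φ : Finset (Finset (V × Bool))) (k : ℕ) (x : V) : Prop :=
  ∃ ψ ⊆ φ, ψ.card ≤ k ∧ (EntailsLit ψ (x, true) ∨ EntailsLit ψ (x, false))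

/-- A Horn clause: at most one positive literal. -/
def IsHornClause (c : Finset (V × Bool)) : Prop := (c.filter (fun l => l.2 = true)).card ≤ 1

/-- A definite Horn clause: exactly one positive literal. -/
def IsDefHornClause (c : Finset (V × Bool)) : Prop := (c.filter (fun l => l.2 = true)).card = 1

variable [DecidableEq V]

/-- The set of variables occurring in a CNF formula. -/
def cnfVars (φ : Finset (Finset (V × Bool))) : Finset V := φ.sup (fun c => c.image Prod.fst)

/-- The reduct `φ|_l`: delete clauses containing `l`, remove occurrences of the
complement of `l` from the remaining clauses. -/
def Reduct (φ : Finset (Finset (V × Bool))) (l : V × Bool) : Finset (Finset (V × Bool)) :=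
  (φ.filter (fun c => l ∉ c)).image (fun c => c.erase (LitCompl l))

/-- The reduct `φ|_L` with respect to a set `L` of literals. -/
def ReductSet (φ : Finset (Finset (V × Bool))) (L : Finset (V × Bool)) :
    Finset (Finset (V × Bool)) :=
  (φ.filter (fun c => ∀ l ∈ L, l ∉ c)).image (fun c => c.filter (fun m => LitCompl m ∉ L))

/-- `x` is an iterative `k`-backbone of `φ`: either it is a `k`-backbone, or some
`k`-backbone `y` with `φ ⊨ l`, `l ∈ {y, ¬y}`, makes `x` an iterative `k`-backbone
of `φ|_l`. -/
inductive IterKBackbone (k : ℕ) : Finset (Finset (V × Bool)) → V → Prop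
  | base {φ : Finset (Finset (V × Bool))} {x : V} :
      KBackbone φ k x → IterKBackbone k φ x
  | step {φ : Finset (Finset (V × Bool))} {x y : V} (b : Bool) :
      KBackbone φ k y → EntailsLit φ (y, b) →
      IterKBackbone k (Reduct φ (y, b)) x → IterKBackbone k φ x

/-- `IsHyperpath φ' s t`: the (Horn) formula `φ'` is a hyperpath from `s` to `t`:
either `t = s`, or there is a clause `c = {¬x₁, …, ¬xₙ, t} ∈ φ'` such that
`φ' \ {c}` is a hyperpath from `s` to each `xᵢ`. -/
inductive IsHyperpath : Finset (Finset (V × Bool)) → V → V → Prop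
  | refl (φ' : Finset (Finset (V × Bool))) (s : V) : IsHyperpath φ' s s
  | step {φ' : Finset (Finset (V × Bool))} {s t : V} (c : Finset (V × Bool)) :
      c ∈ φ' → (t, true) ∈ c → (∀ l ∈ c, l.2 = true → l = (t, true)) →
      (∀ l ∈ c, l.2 = false → IsHyperpath (φ'.erase c) s l.1) →
      IsHyperpath φ' s t

/-- A directed path in the implication graph of a Krom formula `φ`, recorded as a
list of steps `(p, c, q)`: the edge from literal `p` to literal `q` arising from the
clause `c = {p̄, q} ∈ φ`. -/
inductive ImplPath (φ : Finset (Finset (V × Bool))) :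
    (V × Bool) → List ((V × Bool) × Finset (V × Bool) × (V × Bool)) → (V × Bool) → Prop
  | nil (p : V × Bool) : ImplPath φ p [] p
  | cons {p q r : V × Bool} {c : Finset (V × Bool)}
      {steps : List ((V × Bool) × Finset (V × Bool) × (V × Bool))} :
      c ∈ φ → c = {LitCompl p, q} → ImplPath φ q steps r →
      ImplPath φ p ((p, c, q) :: steps) r

/-- The set of clauses used by a path in the implication graph. -/
def usedClauses (steps : List ((V × Bool) × Finset (V × Bool) × (V × Bool))) :
    Finset (Finset (V × Bool)) :=
  (steps.map (fun st => st.2.1)).toFinset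

/-- A path doubly uses a clause if it traverses both of its (distinct) edges. -/
def DoublyUses (steps : List ((V × Bool) × Finset (V × Bool) × (V × Bool)))
    (c : Finset (V × Bool)) : Prop :=
  ∃ p q : V × Bool, (p, c, q) ∈ steps ∧ (LitCompl q, c, LitCompl p) ∈ steps ∧ p ≠ LitCompl q

end LB
def phiN {V : Type*} [DecidableEq V] (n : ℕ) (x : ℕ → V) : Finset (Finset (V × Bool)) :=
  (Finset.Ico 1 n).image
      (fun i => ({(x i, false), (x (i + 1), true)} : Finset (V × Bool))) ∪
    {({(x n, false), (x 1, false)} : Finset (V × Bool))}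

theorem mem_phiN {V : Type*} [DecidableEq V] (n : ℕ) (x : ℕ → V) (c : Finset (V × Bool)) :
    c ∈ phiN n x ↔ (∃ i, (1 ≤ i ∧ i < n) ∧ {(x i, false), (x (i + 1), true)} = c) ∨
      c = {(x n, false), (x 1, false)} := by
  simp [phiN, or_comm]

theorem phiN_card {V : Type*} [DecidableEq V] (n : ℕ) (hn : 2 ≤ n) (x : ℕ → V)
    (hinj : Set.InjOn x (Set.Icc 1 n)) : (phiN n x).card = n := by
  unfold phiN
  rw [Finset.card_union_of_disjoint, Finset.card_image_of_injOn]
  · simp; omega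
  · intro i hi j hj h
    simp only [Finset.coe_Ico, Set.mem_Ico] at hi hj
    have h1 : (x i, false) ∈ ({(x j, false), (x (j + 1), true)} : Finset (V × Bool)) := by
      have h2 : (x i, false) ∈ ({(x i, false), (x (i + 1), true)} : Finset (V × Bool)) := by simp
      simpa only [h] using h2
    simp at h1
    exact hinj ⟨hi.1, hi.2.le⟩ ⟨hj.1, hj.2.le⟩ h1
  · rw [Finset.disjoint_singleton_right]
    intro h
    obtain ⟨i, -, hi⟩ := Finset.mem_image.1 h
    have h2 : (x (i + 1), true) ∈ ({(x i, false), (x (i + 1), true)} : Finset (V × Bool)) := by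
      simp
    rw [hi] at h2
    simp at h2

theorem phiN_entails {V : Type*} [DecidableEq V] (n : ℕ) (hn : 2 ≤ n) (x : ℕ → V) :
    EntailsLit (phiN n x) (x 1, false) := by
  intro τ hτ
  by_contra hne
  have h1 : τ (x 1) = true := by simpa using hne
  have key : ∀ i, 1 ≤ i → i ≤ n → τ (x i) = true := by
    intro i hi
    induction i, hi using Nat.le_induction with
    | base => intro _; exact h1
    | succ i hi ih =>
      intro hin
      obtain ⟨l, hl, hl2⟩ := hτ _ ((mem_phiN n x _).2 (Or.inl ⟨i, ⟨hi, by omega⟩, rfl⟩))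
      have := ih (by omega)
      simp only [Finset.mem_insert, Finset.mem_singleton] at hl
      rcases hl with rfl | rfl <;> simp_all
  obtain ⟨l, hl, hl2⟩ := hτ _ ((mem_phiN n x _).2 (Or.inr rfl))
  have hnn := key n (by omega) le_rfl
  simp only [Finset.mem_insert, Finset.mem_singleton] at hl
  rcases hl with rfl | rfl <;> simp_all

open Classical in
theorem phiN_not_kbackbone {V : Type*} [DecidableEq V] (n : ℕ) (hn : 2 ≤ n) (x : ℕ → V)
    (hinj : Set.InjOn x (Set.Icc 1 n)) (k : ℕ) (hk : k < n) (y : V) :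
    ¬ KBackbone (phiN n x) k y := by
  rintro ⟨ψ, hψ, hc, h | h⟩
  · have := h (fun _ => false) ?_
    · simp at this
    · intro c hcm
      rcases (mem_phiN n x c).1 (hψ hcm) with ⟨i, -, rfl⟩ | rfl
      · exact ⟨(x i, false), by simp, rfl⟩
      · exact ⟨(x n, false), by simp, rfl⟩
  · have hmiss : ∃ c ∈ phiN n x, c ∉ ψ := by
      by_contra hcon
      push Not at hcon
      have := Finset.card_le_card (show phiN n x ⊆ ψ from hcon)
      rw [phiN_card n hn x hinj] at this
      omega
    obtain ⟨d, hd, hdψ⟩ := hmiss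
    suffices ∃ τ : V → Bool, SatCNF τ ψ ∧ τ y = true by
      obtain ⟨τ, h1, h2⟩ := this
      have := h τ h1
      simp_all
    rcases (mem_phiN n x d).1 hd with ⟨i, hi, rfl⟩ | rfl
    · have hS : ∀ j, 1 ≤ j → j ≤ n → ((∃ m, (1 ≤ m ∧ m ≤ i) ∧ x m = x j) ↔ j ≤ i) := by
        intro j hj hjn
        constructor
        · rintro ⟨m, hm, hmj⟩
          have := hinj ⟨hm.1, by omega⟩ ⟨hj, hjn⟩ hmj
          omega
        · intro hji
          exact ⟨j, ⟨hj, hji⟩, rfl⟩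
      by_cases hy : ∃ m, (1 ≤ m ∧ m ≤ i) ∧ x m = y
      · refine ⟨fun v => decide (∃ m, (1 ≤ m ∧ m ≤ i) ∧ x m = v), ?_, decide_eq_true hy⟩
        intro c hcm
        rcases (mem_phiN n x c).1 (hψ hcm) with ⟨j, hj, rfl⟩ | rfl
        · have hne : j ≠ i := by rintro rfl; exact hdψ hcm
          by_cases hji : j ≤ i
          · refine ⟨(x (j + 1), true), by simp, decide_eq_true ?_⟩
            exact (hS (j + 1) (by omega) (by omega)).2 (by omega)
          · refine ⟨(x j, false), by simp, decide_eq_false ?_⟩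
            exact fun hh => hji ((hS j hj.1 (by omega)).1 hh)
        · refine ⟨(x n, false), by simp, decide_eq_false ?_⟩
          intro hh
          have := (hS n (by omega) le_rfl).1 hh
          omega
      · refine ⟨fun v => decide (¬ ∃ m, (1 ≤ m ∧ m ≤ i) ∧ x m = v), ?_, decide_eq_true hy⟩
        intro c hcm
        rcases (mem_phiN n x c).1 (hψ hcm) with ⟨j, hj, rfl⟩ | rfl
        · by_cases hji : j ≤ i
          · refine ⟨(x j, false), by simp, decide_eq_false ?_⟩
            exact not_not.2 ((hS j hj.1 (by omega)).2 hji)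
          · refine ⟨(x (j + 1), true), by simp, decide_eq_true ?_⟩
            intro hh
            have := (hS (j + 1) (by omega) (by omega)).1 hh
            omega
        · refine ⟨(x 1, false), by simp, decide_eq_false ?_⟩
          exact not_not.2 ((hS 1 le_rfl (by omega)).2 hi.1)
    · refine ⟨fun _ => true, ?_, rfl⟩
      intro c hcm
      rcases (mem_phiN n x c).1 (hψ hcm) with ⟨j, hj, rfl⟩ | rfl
      · exact ⟨(x (j + 1), true), by simp, rfl⟩
      · exact absurd hcm hdψ

/-- For `n ≥ 2` and pairwise distinct variables `x₁, …, xₙ`, the formula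
`φₙ = {{¬xᵢ, x_{i+1}} : 1 ≤ i < n} ∪ {{¬xₙ, ¬x₁}}` entails `¬x₁` (so `x₁` is a backbone
of `φₙ`), but for every `1 ≤ k < n`, the variable `x₁` is not an iterative `k`-backbone
of `φₙ`. -/
theorem stmt12 {V : Type*} [DecidableEq V] (n : ℕ) (hn : 2 ≤ n) (x : ℕ → V)
    (hinj : Set.InjOn x (Set.Icc 1 n)) :
    EntailsLit
        ((Finset.Ico 1 n).image
            (fun i => ({(x i, false), (x (i + 1), true)} : Finset (V × Bool))) ∪
          {({(x n, false), (x 1, false)} : Finset (V × Bool))}) (x 1, false) ∧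
      KBackbone
        ((Finset.Ico 1 n).image
            (fun i => ({(x i, false), (x (i + 1), true)} : Finset (V × Bool))) ∪
          {({(x n, false), (x 1, false)} : Finset (V × Bool))})
        ((Finset.Ico 1 n).image
            (fun i => ({(x i, false), (x (i + 1), true)} : Finset (V × Bool))) ∪
          {({(x n, false), (x 1, false)} : Finset (V × Bool))}).card (x 1) ∧
      ∀ k : ℕ, 1 ≤ k → k < n →
        ¬ IterKBackbone k
            ((Finset.Ico 1 n).image
                (fun i => ({(x i, false), (x (i + 1), true)} : Finset (V × Bool))) ∪
              {({(x n, false), (x 1, false)} : Finset (V × Bool))}) (x 1) := by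
  change EntailsLit (phiN n x) (x 1, false) ∧
    KBackbone (phiN n x) (phiN n x).card (x 1) ∧
    ∀ k : ℕ, 1 ≤ k → k < n → ¬ IterKBackbone k (phiN n x) (x 1)
  have hE := phiN_entails n hn x
  refine ⟨hE, ⟨phiN n x, Finset.Subset.refl _, le_rfl, Or.inr hE⟩, ?_⟩
  intro k _ hk hI
  cases hI with
  | base h => exact phiN_not_kbackbone n hn x hinj k hk _ h
  | step b h _ _ => exact phiN_not_kbackbone n hn x hinj k hk _ h
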